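/- There exists a constant C > 0 such that for i ∈ {1,2} and all trigonometric polynomials u, v, w on 𝕋² one has ‖Λᵢ(u,v,w)‖_{X^{−7/16,0}} ≤ C ‖u‖_{X^{1/2,0}} ‖v‖_{X^{1/2,0}} ‖w‖_{X^{1/2,0}}, where Λᵢ is applied in the x-variable for each fixed t. -/

import Mathlib

/-!
Write `σ(q,k) = q + k²` and `⟨·⟩ = jap`. After taking absolute values of the Fourier coefficients,
both `Λ₁` and `Λ₂` are dominated by the full trilinear sum
`T(p) = Σ_{p₁+p₂+p₃=p} |a(-p₁)| |b(p₂)| |c(p₃)|`: for `Λ₁` a frequency restriction is dropped, and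
`Λ₂` is the part `(k₁,k₂,k₃) = (-k,k,k)` of the sum. The resonance function is therefore not needed.

Everything reduces to the finiteness of
`S = sup_n Σ_p ⟨σ(p)⟩^{-7/8} ⟨σ(n-p)⟩^{-7/8}` (`exists_kernel_bound`).
Two applications of Cauchy-Schwarz then give
`Σ_p ⟨σ(p)⟩^{-7/8} T(p)² ≤ S² ‖a‖² ‖b‖² ‖c‖²` in the `X^{7/16,0}` norms (`trilinear_sum_le`): one
bounds `b * c` in `ℓ²`, the other distributes the weights of `a` and of the output.

For `n = (τ,ξ)` and `p = (q,k)` one has `σ(p) + σ(n-p) = τ + k² + (ξ-k)² =: N_k`, independent of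
`q`. Moving part of the decay from the larger factor to `N_k` gives
`⟨x⟩^{-7/8}⟨y⟩^{-7/8} ≤ 2⟨x+y⟩^{-5/8}(⟨x⟩^{-9/8} + ⟨y⟩^{-9/8})`, which is summable in `q`. Finally
`2 N_k = (2k-ξ)² + (2τ+ξ²)` is a quadratic in `k`, so `|N_k|` grows quadratically away from two
integers and `Σ_k ⟨N_k⟩^{-5/8}` is bounded uniformly in `n`.

Sums of nonnegative terms are taken in `ℝ≥0∞`, where they may be rearranged freely.
-/

noncomputable section

open Real Complex

/-- The Japanese bracket `⟨m⟩ = (1+m²)^{1/2}`. -/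
def jap (m : ℤ) : ℝ := Real.sqrt (1 + (m : ℝ) ^ 2)

/-- The Bourgain norm `‖u‖_{X^{b,s}} = (Σ_{(q,k)} ⟨q+k²⟩^{2b} ⟨k⟩^{2s} |û(q,k)|²)^{1/2}` of a
trigonometric polynomial on `𝕋²`, expressed through its space-time Fourier coefficients. -/
def Xnorm (b s : ℝ) (f : ℤ × ℤ → ℂ) : ℝ :=
  (∑' p : ℤ × ℤ, jap (p.1 + p.2 ^ 2) ^ (2 * b) * jap p.2 ^ (2 * s) * ‖f p‖ ^ 2) ^ ((1:ℝ)/2)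

/-- Space-time Fourier coefficients of `Λ₁(u,v,w)`, where `Λ₁` (defined for functions of `x` by
`Λ₁(u,v,w)(x) = Σ_{(k₁+k₂)(k₁+k₃)≠0} conj(û(−k₁)) v̂(k₂) ŵ(k₃) e^{i(k₁+k₂+k₃)x}`) is applied in
the `x`-variable at each fixed `t`, and `a, b, c` are the space-time coefficients of `u, v, w`:
`(Λ₁(u,v,w))^(q,k) = Σ_{q₁+q₂+q₃=q, k₁+k₂+k₃=k, (k₁+k₂)(k₁+k₃)≠0}
  conj(a(−q₁,−k₁)) b(q₂,k₂) c(q₃,k₃)`. -/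
def Lam1coef (a b c : ℤ × ℤ → ℂ) (p : ℤ × ℤ) : ℂ :=
  ∑' m : (ℤ × ℤ) × (ℤ × ℤ),
    if (m.1.2 + m.2.2) * (m.1.2 + (p.2 - m.1.2 - m.2.2)) ≠ 0 then
      (starRingEnd ℂ) (a (-m.1.1, -m.1.2)) * b (m.2.1, m.2.2) *
        c (p.1 - m.1.1 - m.2.1, p.2 - m.1.2 - m.2.2)
    else 0

/-- Space-time Fourier coefficients of `Λ₂(u,v,w)`, where `Λ₂` (defined for functions of `x` by
`Λ₂(u,v,w)(x) = −Σ_k conj(û(−k)) v̂(−k) ŵ(−k) e^{−ikx}`) is applied in the `x`-variable at each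
fixed `t`, and `a, b, c` are the space-time coefficients of `u, v, w`:
`(Λ₂(u,v,w))^(q,k) = −Σ_{q₁+q₂+q₃=q} conj(a(−q₁,k)) b(q₂,k) c(q₃,k)`. -/
def Lam2coef (a b c : ℤ × ℤ → ℂ) (p : ℤ × ℤ) : ℂ :=
  - ∑' m : ℤ × ℤ,
      (starRingEnd ℂ) (a (-m.1, p.2)) * b (m.2, p.2) * c (p.1 - m.1 - m.2, p.2)

open scoped ENNReal

/-! ### The Japanese bracket -/

lemma one_le_jap (m : ℤ) : 1 ≤ jap m := by
  unfold jap
  exact Real.one_le_sqrt.mpr (by nlinarith [sq_nonneg (m : ℝ)])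

lemma jap_pos (m : ℤ) : 0 < jap m := lt_of_lt_of_le one_pos (one_le_jap m)

lemma jap_sq (m : ℤ) : jap m ^ 2 = 1 + (m : ℝ) ^ 2 := by
  unfold jap
  exact Real.sq_sqrt (by positivity)

lemma abs_le_jap (m : ℤ) : |(m : ℝ)| ≤ jap m := by
  refine abs_le_of_sq_le_sq ?_ (jap_pos m).le
  rw [jap_sq]; linarith

lemma jap_add_le (x y : ℤ) : jap (x + y) ≤ jap x + jap y := by
  refine abs_le_of_sq_le_sq' ?_ (add_pos (jap_pos x) (jap_pos y)).le |>.2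
  have h1 := abs_le_jap x
  have h2 := abs_le_jap y
  have h3 : (x : ℝ) * y ≤ jap x * jap y := by
    calc (x : ℝ) * y ≤ |(x : ℝ) * y| := le_abs_self _
      _ = |(x : ℝ)| * |(y : ℝ)| := abs_mul _ _
      _ ≤ _ := mul_le_mul h1 h2 (abs_nonneg _) (jap_pos x).le
  have h4 := jap_sq (x + y)
  push_cast at h4
  nlinarith [jap_sq x, jap_sq y]

/-- The pointwise inequality when `⟨y⟩` is the larger bracket: then `⟨x + y⟩ ≤ 2⟨y⟩`. -/
lemma jap_split_aux (x y : ℤ) (h : jap x ≤ jap y) :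
    jap x ^ (-(7/8) : ℝ) * jap y ^ (-(7/8) : ℝ)
      ≤ 2 * jap (x + y) ^ (-(5/8) : ℝ) * jap x ^ (-(9/8) : ℝ) := by
  have hx := jap_pos x
  have hy := jap_pos y
  have h1 : jap y ^ (-(7/8) : ℝ) = jap y ^ (-(5/8) : ℝ) * jap y ^ (-(1/4) : ℝ) := by
    rw [← Real.rpow_add hy]; norm_num
  have h2 : jap x ^ (-(9/8) : ℝ) = jap x ^ (-(7/8) : ℝ) * jap x ^ (-(1/4) : ℝ) := by
    rw [← Real.rpow_add hx]; norm_num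
  have h3 : jap y ^ (-(1/4) : ℝ) ≤ jap x ^ (-(1/4) : ℝ) :=
    Real.rpow_le_rpow_of_nonpos hx h (by norm_num)
  have h4 : jap y ^ (-(5/8) : ℝ) ≤ 2 * jap (x + y) ^ (-(5/8) : ℝ) := by
    have h5 : jap (x + y) ≤ 2 * jap y := by linarith [jap_add_le x y]
    have h6 : (2 * jap y) ^ (-(5/8) : ℝ) ≤ jap (x + y) ^ (-(5/8) : ℝ) :=
      Real.rpow_le_rpow_of_nonpos (jap_pos _) h5 (by norm_num)
    rw [Real.mul_rpow (by norm_num) hy.le] at h6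
    have h7 : (2 : ℝ) * 2 ^ (-(5/8) : ℝ) ≥ 1 := by
      have : (2 : ℝ) * 2 ^ (-(5/8) : ℝ) = 2 ^ (3/8 : ℝ) := by
        rw [← Real.rpow_one_add' (by norm_num) (by norm_num)]; norm_num
      rw [this]
      exact Real.one_le_rpow (by norm_num) (by norm_num)
    have h8 : 0 ≤ jap y ^ (-(5/8) : ℝ) := Real.rpow_nonneg hy.le _
    nlinarith
  rw [h1, h2]
  calc _ = jap x ^ (-(7/8) : ℝ) * (jap y ^ (-(5/8) : ℝ) * jap y ^ (-(1/4) : ℝ)) := rfl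
    _ ≤ jap x ^ (-(7/8) : ℝ) * (2 * jap (x + y) ^ (-(5/8) : ℝ) * jap x ^ (-(1/4) : ℝ)) := by
        have := jap_pos (x + y)
        gcongr
    _ = _ := by ring

lemma jap_split (x y : ℤ) :
    jap x ^ (-(7/8) : ℝ) * jap y ^ (-(7/8) : ℝ)
      ≤ 2 * jap (x + y) ^ (-(5/8) : ℝ) * (jap x ^ (-(9/8) : ℝ) + jap y ^ (-(9/8) : ℝ)) := by
  have hx : 0 ≤ jap x ^ (-(9/8) : ℝ) := Real.rpow_nonneg (jap_pos _).le _
  have hy : 0 ≤ jap y ^ (-(9/8) : ℝ) := Real.rpow_nonneg (jap_pos _).le _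
  have hN : 0 ≤ jap (x + y) ^ (-(5/8) : ℝ) := Real.rpow_nonneg (jap_pos _).le _
  rcases le_total (jap x) (jap y) with h | h
  · nlinarith [jap_split_aux x y h, mul_nonneg hN hx, mul_nonneg hN hy]
  · have := jap_split_aux y x h
    rw [add_comm y x] at this
    nlinarith [mul_nonneg hN hx, mul_nonneg hN hy]

/-- The series `Σ_m ⟨m⟩^{-s}`, as an extended nonnegative real. -/
def japSum (s : ℝ) : ℝ≥0∞ := ∑' m : ℤ, ENNReal.ofReal (jap m ^ (-s))

lemma japSum_ne_top {s : ℝ} (hs : 1 < s) : japSum s ≠ ∞ := by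
  refine Summable.tsum_ofReal_ne_top ?_
  refine Summable.of_norm_bounded_eventually (Real.summable_abs_int_rpow hs) ?_
  -- At `m = 0` the junk value `|0| ^ (-s) = 0` breaks the comparison, so it is left out.
  refine (Set.finite_singleton (0 : ℤ)).subset fun m hm => ?_
  by_contra h0
  refine hm ?_
  have h1 : (0 : ℝ) < |(m : ℝ)| := abs_pos.mpr (by exact_mod_cast h0)
  change ‖jap m ^ (-s)‖ ≤ |(m : ℝ)| ^ (-s)
  rw [Real.norm_of_nonneg (Real.rpow_nonneg (jap_pos _).le _)]
  exact Real.rpow_le_rpow_of_nonpos h1 (abs_le_jap m) (by linarith)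

/-! ### The kernel bound -/

/-- If `2k` is close to `r`, then `k` is close to the integer part of `r / 2`. -/
lemma jap_sub_floor_sq_le (r : ℝ) (k N : ℤ) (h : (2 * k - r) ^ 2 ≤ 2 * |(N : ℝ)|) :
    jap (k - ⌊r / 2⌋) ^ 2 ≤ 4 * jap N := by
  rw [jap_sq]
  have h1 := Int.floor_le (r / 2)
  have h2 := Int.lt_floor_add_one (r / 2)
  have h3 := abs_le_jap N
  have h4 := one_le_jap N
  push_cast
  set j : ℝ := (⌊r / 2⌋ : ℝ)
  nlinarith [sq_nonneg ((2 * k - r) - (r - 2 * j))]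

/-- Since `2(τ + k² + (ξ-k)²) = (2k-ξ)² + c` with `c` independent of `k`, this quantity is at
least quadratic in the distance from `k` to one of two integers, the roots up to rounding. -/
lemma exists_roots (τ ξ : ℤ) : ∃ k₁ k₂ : ℤ, ∀ k : ℤ,
    jap (k - k₁) ^ 2 ≤ 4 * jap (τ + k ^ 2 + (ξ - k) ^ 2) ∨
    jap (k - k₂) ^ 2 ≤ 4 * jap (τ + k ^ 2 + (ξ - k) ^ 2) := by
  -- `√` is `0` on negative numbers, so `M = 0` when the quadratic has no real root.
  set M : ℝ := Real.sqrt (-(2 * τ + ξ ^ 2)) with hM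
  refine ⟨⌊(ξ + M) / 2⌋, ⌊(ξ - M) / 2⌋, fun k => ?_⟩
  set N : ℤ := τ + k ^ 2 + (ξ - k) ^ 2 with hN
  have hNr : 2 * (N : ℝ) = (2 * k - ξ) ^ 2 + (2 * τ + ξ ^ 2) := by
    rw [hN]; push_cast; ring
  have hM0 : 0 ≤ M := Real.sqrt_nonneg _
  have key : |2 * (k : ℝ) - ξ| ^ 2 - M ^ 2 ≤ 2 * |(N : ℝ)| ∧
      M ^ 2 - |2 * (k : ℝ) - ξ| ^ 2 ≤ 2 * |(N : ℝ)| := by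
    have e1 := le_abs_self (N : ℝ)
    have e2 := neg_le_abs (N : ℝ)
    rw [sq_abs]
    rcases le_total (0 : ℝ) (2 * τ + ξ ^ 2) with hc | hc
    · have : M = 0 := Real.sqrt_eq_zero_of_nonpos (by linarith)
      rw [this]
      constructor <;> nlinarith [sq_nonneg (2 * (k : ℝ) - ξ)]
    · have : M ^ 2 = -(2 * τ + ξ ^ 2) := Real.sq_sqrt (by linarith)
      constructor <;> linarith
  have hmin : (|2 * (k : ℝ) - ξ| - M) ^ 2 ≤ 2 * |(N : ℝ)| := by
    have e := abs_nonneg (2 * (k : ℝ) - ξ)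
    rcases le_total M |2 * (k : ℝ) - ξ| with h | h
    · nlinarith [key.1, mul_nonneg hM0 (sub_nonneg.mpr h)]
    · nlinarith [key.2, mul_nonneg e (sub_nonneg.mpr h)]
  rcases abs_choice (2 * (k : ℝ) - ξ) with h | h
  · left
    refine jap_sub_floor_sq_le _ _ _ ?_
    rw [h] at hmin
    calc _ = (2 * (k : ℝ) - ξ - M) ^ 2 := by ring
      _ ≤ _ := hmin
  · right
    refine jap_sub_floor_sq_le _ _ _ ?_
    rw [h] at hmin
    calc _ = (-(2 * (k : ℝ) - ξ) - M) ^ 2 := by ring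
      _ ≤ _ := hmin

lemma jap_rpow_le_of_sq_le (k N : ℤ) (h : jap k ^ 2 ≤ 4 * jap N) :
    jap N ^ (-(5/8) : ℝ) ≤ 4 * jap k ^ (-(5/4) : ℝ) := by
  have h1 : jap k ^ (-(5/4) : ℝ) = (jap k ^ 2) ^ (-(5/8) : ℝ) := by
    rw [← Real.rpow_natCast, ← Real.rpow_mul (jap_pos k).le]; norm_num
  have h2 : (4 * jap N) ^ (-(5/8) : ℝ) ≤ (jap k ^ 2) ^ (-(5/8) : ℝ) :=
    Real.rpow_le_rpow_of_nonpos (pow_pos (jap_pos k) 2) h (by norm_num)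
  rw [Real.mul_rpow (by norm_num) (jap_pos N).le] at h2
  have h3 : (4 : ℝ) * 4 ^ (-(5/8) : ℝ) ≥ 1 := by
    have : (4 : ℝ) * 4 ^ (-(5/8) : ℝ) = 4 ^ (3/8 : ℝ) := by
      rw [← Real.rpow_one_add' (by norm_num) (by norm_num)]; norm_num
    rw [this]
    exact Real.one_le_rpow (by norm_num) (by norm_num)
  have h4 : 0 ≤ jap N ^ (-(5/8) : ℝ) := Real.rpow_nonneg (jap_pos N).le _
  rw [h1]
  nlinarith

lemma tsum_quadratic_le (τ ξ : ℤ) :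
    ∑' k : ℤ, ENNReal.ofReal (jap (τ + k ^ 2 + (ξ - k) ^ 2) ^ (-(5/8) : ℝ))
      ≤ 8 * japSum (5/4) := by
  obtain ⟨k₁, k₂, h⟩ := exists_roots τ ξ
  have hs : ∀ j : ℤ, ∑' k : ℤ, 4 * ENNReal.ofReal (jap (k - j) ^ (-(5/4) : ℝ))
      = 4 * japSum (5/4) := fun j => by
    rw [ENNReal.tsum_mul_left]
    congr 1
    exact (Equiv.subRight j).tsum_eq (fun m : ℤ => ENNReal.ofReal (jap m ^ (-(5/4) : ℝ)))
  calc _ ≤ ∑' k : ℤ, (4 * ENNReal.ofReal (jap (k - k₁) ^ (-(5/4) : ℝ))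
            + 4 * ENNReal.ofReal (jap (k - k₂) ^ (-(5/4) : ℝ))) := by
        refine ENNReal.tsum_le_tsum fun k => ?_
        have e : ∀ x : ℝ, 4 * ENNReal.ofReal x = ENNReal.ofReal (4 * x) := fun x => by
          rw [ENNReal.ofReal_mul (by norm_num)]; norm_num
        rw [e, e]
        rcases h k with h | h
        · exact (ENNReal.ofReal_le_ofReal (jap_rpow_le_of_sq_le _ _ h)).trans le_self_add
        · exact (ENNReal.ofReal_le_ofReal (jap_rpow_le_of_sq_le _ _ h)).trans le_add_self
    _ = 8 * japSum (5/4) := by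
        rw [ENNReal.tsum_add, hs, hs, ← add_mul]; norm_num

/-- The weight `⟨q + k²⟩^s` at the space-time frequency `(q,k)`. -/
def wt (s : ℝ) (p : ℤ × ℤ) : ℝ≥0∞ := ENNReal.ofReal (jap (p.1 + p.2 ^ 2) ^ s)

lemma wt_sq (s : ℝ) (p : ℤ × ℤ) : wt s p ^ 2 = wt (2 * s) p := by
  unfold wt
  rw [← ENNReal.ofReal_pow (Real.rpow_nonneg (jap_pos _).le _), ← Real.rpow_natCast,
    ← Real.rpow_mul (jap_pos _).le]
  congr 2
  push_cast; ring

lemma wt_neg_mul (s : ℝ) (p : ℤ × ℤ) : wt (-s) p * wt s p = 1 := by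
  unfold wt
  rw [← ENNReal.ofReal_mul (Real.rpow_nonneg (jap_pos _).le _), ← Real.rpow_add (jap_pos _)]
  simp

/-- For fixed `k`, the sum over `q` of the kernel. -/
lemma tsum_kernel_inner_le (τ ξ k : ℤ) :
    ∑' q : ℤ, (wt (-(7/16)) (q, k) * wt (-(7/16)) (τ - q, ξ - k)) ^ 2
      ≤ ENNReal.ofReal (jap (τ + k ^ 2 + (ξ - k) ^ 2) ^ (-(5/8) : ℝ)) * (4 * japSum (9/8)) := by
  set D := ENNReal.ofReal (jap (τ + k ^ 2 + (ξ - k) ^ 2) ^ (-(5/8) : ℝ)) with hD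
  have hpt : ∀ q : ℤ, (wt (-(7/16)) (q, k) * wt (-(7/16)) (τ - q, ξ - k)) ^ 2
      ≤ 2 * D * (ENNReal.ofReal (jap (q + k ^ 2) ^ (-(9/8) : ℝ))
          + ENNReal.ofReal (jap (τ - q + (ξ - k) ^ 2) ^ (-(9/8) : ℝ))) := fun q => by
    have h := jap_split (q + k ^ 2) (τ - q + (ξ - k) ^ 2)
    rw [show q + k ^ 2 + (τ - q + (ξ - k) ^ 2) = τ + k ^ 2 + (ξ - k) ^ 2 by ring] at h
    have nn : ∀ (m : ℤ) (s : ℝ), 0 ≤ jap m ^ s := fun m s => Real.rpow_nonneg (jap_pos m).le s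
    rw [mul_pow, wt_sq, wt_sq, hD, ← ENNReal.ofReal_add (nn _ _) (nn _ _),
      ← ENNReal.ofReal_ofNat, ← ENNReal.ofReal_mul (by norm_num),
      ← ENNReal.ofReal_mul (mul_nonneg (by norm_num) (nn _ _))]
    unfold wt
    rw [← ENNReal.ofReal_mul (nn _ _), show (2 * -(7/16) : ℝ) = -(7/8) by norm_num]
    exact ENNReal.ofReal_le_ofReal h
  refine (ENNReal.tsum_le_tsum hpt).trans (le_of_eq ?_)
  have h1 : ∑' q : ℤ, ENNReal.ofReal (jap (q + k ^ 2) ^ (-(9/8) : ℝ)) = japSum (9/8) :=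
    (Equiv.addRight (k ^ 2)).tsum_eq (fun m : ℤ => ENNReal.ofReal (jap m ^ (-(9/8) : ℝ)))
  have h2 : ∑' q : ℤ, ENNReal.ofReal (jap (τ - q + (ξ - k) ^ 2) ^ (-(9/8) : ℝ))
      = japSum (9/8) :=
    ((Equiv.subLeft τ).trans (Equiv.addRight ((ξ - k) ^ 2))).tsum_eq
      (fun m : ℤ => ENNReal.ofReal (jap m ^ (-(9/8) : ℝ)))
  rw [ENNReal.tsum_mul_left, ENNReal.tsum_add, h1, h2]
  ring

lemma exists_kernel_bound : ∃ S : ℝ≥0∞, S ≠ ∞ ∧ ∀ n : ℤ × ℤ,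
    ∑' p : ℤ × ℤ, (wt (-(7/16)) p * wt (-(7/16)) (n - p)) ^ 2 ≤ S := by
  refine ⟨8 * japSum (5/4) * (4 * japSum (9/8)), ?_, ?_⟩
  · have h1 := japSum_ne_top (s := 5/4) (by norm_num)
    have h2 := japSum_ne_top (s := 9/8) (by norm_num)
    finiteness
  · rintro ⟨τ, ξ⟩
    calc _ = ∑' (q : ℤ) (k : ℤ), (wt (-(7/16)) (q, k) * wt (-(7/16)) (τ - q, ξ - k)) ^ 2 :=
          ENNReal.tsum_prod (f := fun q k : ℤ =>
            (wt (-(7/16)) (q, k) * wt (-(7/16)) (τ - q, ξ - k)) ^ 2)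
      _ = ∑' (k : ℤ) (q : ℤ), (wt (-(7/16)) (q, k) * wt (-(7/16)) (τ - q, ξ - k)) ^ 2 :=
          ENNReal.tsum_comm
      _ ≤ ∑' k : ℤ, ENNReal.ofReal (jap (τ + k ^ 2 + (ξ - k) ^ 2) ^ (-(5/8) : ℝ))
            * (4 * japSum (9/8)) := ENNReal.tsum_le_tsum fun k => tsum_kernel_inner_le τ ξ k
      _ ≤ _ := by
          rw [ENNReal.tsum_mul_right]
          gcongr
          exact tsum_quadratic_le τ ξ

/-! ### Cauchy-Schwarz -/

lemma tsum_mul_sq_le {ι : Type*} (f g : ι → ℝ≥0∞) :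
    (∑' i, f i * g i) ^ 2 ≤ (∑' i, f i ^ 2) * ∑' i, g i ^ 2 := by
  let _ : MeasurableSpace ι := ⊤
  have h := ENNReal.lintegral_mul_le_Lp_mul_Lq (MeasureTheory.Measure.count (α := ι))
    Real.HolderConjugate.two_two (f := f) (g := g)
    (measurable_from_top.aemeasurable) (measurable_from_top.aemeasurable)
  simp only [MeasureTheory.lintegral_count, Pi.mul_apply, ENNReal.rpow_ofNat] at h
  refine (pow_le_pow_left' h 2).trans (le_of_eq ?_)
  rw [mul_pow, ← ENNReal.rpow_natCast, ← ENNReal.rpow_natCast, ← ENNReal.rpow_mul,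
    ← ENNReal.rpow_mul]
  norm_num

/-- The square of the `X^{7/16,0}` norm of a nonnegative coefficient family. -/
def energy (A : ℤ × ℤ → ℝ≥0∞) : ℝ≥0∞ := ∑' p, (wt (7/16) p * A p) ^ 2

/-- The bilinear `X^{7/16,0} × X^{7/16,0} → L²` estimate. -/
lemma bilinear_sum_le {S : ℝ≥0∞}
    (hS : ∀ n : ℤ × ℤ, ∑' p : ℤ × ℤ, (wt (-(7/16)) p * wt (-(7/16)) (n - p)) ^ 2 ≤ S)
    (B C : ℤ × ℤ → ℝ≥0∞) :
    ∑' n : ℤ × ℤ, (∑' p, B p * C (n - p)) ^ 2 ≤ S * (energy B * energy C) := by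
  have hn : ∀ n : ℤ × ℤ, (∑' p, B p * C (n - p)) ^ 2
      ≤ S * ∑' p, (wt (7/16) p * B p) ^ 2 * (wt (7/16) (n - p) * C (n - p)) ^ 2 := fun n => by
    have e : ∀ p, B p * C (n - p) = (wt (-(7/16)) p * wt (-(7/16)) (n - p))
        * ((wt (7/16) p * B p) * (wt (7/16) (n - p) * C (n - p))) := fun p => by
      calc _ = (wt (-(7/16)) p * wt (7/16) p) * (wt (-(7/16)) (n - p) * wt (7/16) (n - p))
            * (B p * C (n - p)) := by rw [wt_neg_mul, wt_neg_mul]; simp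
        _ = _ := by ring
    rw [tsum_congr e]
    refine (tsum_mul_sq_le _ _).trans ?_
    simp only [mul_pow _ _ 2] at hS ⊢
    gcongr
    exact hS n
  refine (ENNReal.tsum_le_tsum hn).trans (le_of_eq ?_)
  rw [ENNReal.tsum_mul_left, ENNReal.tsum_comm]
  congr 1
  have h2 : ∀ p : ℤ × ℤ, ∑' n : ℤ × ℤ, (wt (7/16) (n - p) * C (n - p)) ^ 2 = energy C :=
    fun p => (Equiv.subRight p).tsum_eq (fun m => (wt (7/16) m * C m) ^ 2)
  simp only [ENNReal.tsum_mul_left, h2]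
  rw [ENNReal.tsum_mul_right]
  rfl

/-- The full trilinear sum, with the coefficients of the first factor reflected as for a complex
conjugate. -/
def triSum (A B C : ℤ × ℤ → ℝ≥0∞) (p : ℤ × ℤ) : ℝ≥0∞ :=
  ∑' m : (ℤ × ℤ) × (ℤ × ℤ), A (-m.1) * B m.2 * C (p - m.1 - m.2)

/-- Substituting `n = p - m₁` shows the trilinear sum to be a correlation of `A` with `B * C`. -/
lemma triSum_eq (A B C : ℤ × ℤ → ℝ≥0∞) (p : ℤ × ℤ) :
    triSum A B C p = ∑' n : ℤ × ℤ, A (n - p) * ∑' m, B m * C (n - m) := by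
  unfold triSum
  rw [ENNReal.tsum_prod (f := fun m₁ m₂ : ℤ × ℤ => A (-m₁) * B m₂ * C (p - m₁ - m₂)),
    ← (Equiv.subLeft p).tsum_eq]
  refine tsum_congr fun n => ?_
  rw [← ENNReal.tsum_mul_left]
  refine tsum_congr fun m => ?_
  simp [mul_assoc]

lemma trilinear_sum_le {S : ℝ≥0∞}
    (hS : ∀ n : ℤ × ℤ, ∑' p : ℤ × ℤ, (wt (-(7/16)) p * wt (-(7/16)) (n - p)) ^ 2 ≤ S)
    (A B C : ℤ × ℤ → ℝ≥0∞) :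
    ∑' p : ℤ × ℤ, wt (-(7/16)) p ^ 2 * triSum A B C p ^ 2
      ≤ S ^ 2 * (energy A * energy B * energy C) := by
  set G : ℤ × ℤ → ℝ≥0∞ := fun n => ∑' m, B m * C (n - m) with hG
  have hp : ∀ p : ℤ × ℤ, triSum A B C p ^ 2
      ≤ energy A * ∑' n, wt (-(7/16)) (n - p) ^ 2 * G n ^ 2 := fun p => by
    have e : ∀ n, A (n - p) * G n
        = (wt (7/16) (n - p) * A (n - p)) * (wt (-(7/16)) (n - p) * G n) := fun n => by
      calc _ = (wt (-(7/16)) (n - p) * wt (7/16) (n - p)) * (A (n - p) * G n) := by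
            rw [wt_neg_mul, one_mul]
        _ = _ := by ring
    rw [triSum_eq, tsum_congr e]
    refine (tsum_mul_sq_le _ _).trans (le_of_eq ?_)
    congr 1
    · exact (Equiv.subRight p).tsum_eq (fun m => (wt (7/16) m * A m) ^ 2)
    · simp only [mul_pow]
  calc _ ≤ ∑' p : ℤ × ℤ, ∑' n, energy A *
          ((wt (-(7/16)) p * wt (-(7/16)) (n - p)) ^ 2 * G n ^ 2) := by
        refine ENNReal.tsum_le_tsum fun p => ?_
        refine (mul_le_mul_right (hp p) _).trans (le_of_eq ?_)
        rw [← ENNReal.tsum_mul_left, ← ENNReal.tsum_mul_left]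
        exact tsum_congr fun n => by ring
    _ = energy A * ∑' n, (∑' p, (wt (-(7/16)) p * wt (-(7/16)) (n - p)) ^ 2) * G n ^ 2 := by
        rw [ENNReal.tsum_comm]
        simp only [ENNReal.tsum_mul_left, ENNReal.tsum_mul_right]
    _ ≤ energy A * ∑' n, S * G n ^ 2 := by
        gcongr with n
        exact hS n
    _ ≤ energy A * (S * (S * (energy B * energy C))) := by
        rw [ENNReal.tsum_mul_left]
        gcongr
        exact bilinear_sum_le hS B C
    _ = _ := by ring

/-! ### Domination of `Λ₁` and `Λ₂`, and return to the norms -/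

lemma enorm_Lam1coef_le (a b c : ℤ × ℤ → ℂ) (p : ℤ × ℤ) :
    ‖Lam1coef a b c p‖ₑ ≤ triSum (fun p => ‖a p‖ₑ) (fun p => ‖b p‖ₑ) (fun p => ‖c p‖ₑ) p := by
  unfold Lam1coef triSum
  refine enorm_tsum_le_tsum_enorm.trans (ENNReal.tsum_le_tsum fun m => ?_)
  split_ifs
  · rw [enorm_mul, enorm_mul, RCLike.enorm_conj]
    rfl
  · simp

lemma enorm_Lam2coef_le (a b c : ℤ × ℤ → ℂ) (p : ℤ × ℤ) :
    ‖Lam2coef a b c p‖ₑ ≤ triSum (fun p => ‖a p‖ₑ) (fun p => ‖b p‖ₑ) (fun p => ‖c p‖ₑ) p := by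
  unfold Lam2coef triSum
  rw [enorm_neg]
  refine enorm_tsum_le_tsum_enorm.trans ?_
  have hinj : Function.Injective
      (fun m : ℤ × ℤ => (((m.1, -p.2), (m.2, p.2)) : (ℤ × ℤ) × (ℤ × ℤ))) := by
    rintro ⟨x, y⟩ ⟨x', y'⟩ h
    simp only [Prod.mk.injEq] at h
    simp [h.1.1, h.2.1]
  refine le_trans (ENNReal.tsum_le_tsum fun m => ?_)
    (ENNReal.tsum_comp_le_tsum_of_injective hinj _)
  rw [enorm_mul, enorm_mul, RCLike.enorm_conj]
  refine le_of_eq ?_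
  congr 2
  · simp
  · congr 1
    ext <;> simp

/-- The `X^{s,0}` norm through a sum in `ℝ≥0∞`. A divergent sum gives `0` on both sides. -/
lemma Xnorm_zero_eq (s : ℝ) (f : ℤ × ℤ → ℂ) :
    Xnorm s 0 f = (∑' p, wt s p ^ 2 * ‖f p‖ₑ ^ 2).toReal ^ ((1:ℝ)/2) := by
  unfold Xnorm
  rw [ENNReal.tsum_toReal_eq (fun p => by unfold wt; finiteness)]
  congr 1
  refine tsum_congr fun p => ?_
  rw [wt_sq]
  unfold wt
  simp [Real.rpow_nonneg (jap_pos _).le]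

lemma energy_le (f : ℤ × ℤ → ℂ) :
    energy (fun p => ‖f p‖ₑ) ≤ ∑' p, wt (1/2) p ^ 2 * ‖f p‖ₑ ^ 2 := by
  refine ENNReal.tsum_le_tsum fun p => ?_
  rw [mul_pow]
  gcongr
  refine ENNReal.ofReal_le_ofReal ?_
  exact Real.rpow_le_rpow_of_exponent_le (one_le_jap _) (by norm_num)

lemma Xsum_ne_top (s : ℝ) (f : ℤ × ℤ → ℂ) (hf : (Function.support f).Finite) :
    ∑' p, wt s p ^ 2 * ‖f p‖ₑ ^ 2 ≠ ∞ := by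
  rw [tsum_eq_sum' (s := hf.toFinset)]
  · exact ENNReal.sum_ne_top.mpr fun p _ => by unfold wt; finiteness
  · intro p hp
    simp only [Set.Finite.coe_toFinset, Function.mem_support] at hp ⊢
    rintro h
    simp [h] at hp

lemma Xnorm_le_of_enorm_le {S : ℝ≥0∞} (hS_top : S ≠ ∞)
    (hS : ∀ n : ℤ × ℤ, ∑' p : ℤ × ℤ, (wt (-(7/16)) p * wt (-(7/16)) (n - p)) ^ 2 ≤ S)
    (a b c : ℤ × ℤ → ℂ) (ha : (Function.support a).Finite) (hb : (Function.support b).Finite)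
    (hc : (Function.support c).Finite) (L : ℤ × ℤ → ℂ)
    (hL : ∀ p, ‖L p‖ₑ ≤ triSum (fun p => ‖a p‖ₑ) (fun p => ‖b p‖ₑ) (fun p => ‖c p‖ₑ) p) :
    Xnorm (-(7/16)) 0 L
      ≤ (S.toReal + 1) * Xnorm (1/2) 0 a * Xnorm (1/2) 0 b * Xnorm (1/2) 0 c := by
  simp only [Xnorm_zero_eq]
  have ta := Xsum_ne_top (1/2) a ha
  have tb := Xsum_ne_top (1/2) b hb
  have tc := Xsum_ne_top (1/2) c hc
  have key : ∑' p, wt (-(7/16)) p ^ 2 * ‖L p‖ₑ ^ 2 ≤ S ^ 2 *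
      ((∑' p, wt (1/2) p ^ 2 * ‖a p‖ₑ ^ 2) * (∑' p, wt (1/2) p ^ 2 * ‖b p‖ₑ ^ 2) *
        (∑' p, wt (1/2) p ^ 2 * ‖c p‖ₑ ^ 2)) :=
    calc _ ≤ ∑' p, wt (-(7/16)) p ^ 2 *
          triSum (fun p => ‖a p‖ₑ) (fun p => ‖b p‖ₑ) (fun p => ‖c p‖ₑ) p ^ 2 := by
          gcongr with p
          exact hL p
      _ ≤ _ := trilinear_sum_le hS _ _ _
      _ ≤ _ := by gcongr <;> exact energy_le _
  generalize (∑' p, wt (1/2) p ^ 2 * ‖a p‖ₑ ^ 2) = x at *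
  generalize (∑' p, wt (1/2) p ^ 2 * ‖b p‖ₑ ^ 2) = y at *
  generalize (∑' p, wt (1/2) p ^ 2 * ‖c p‖ₑ ^ 2) = z at *
  have k2 := ENNReal.toReal_mono (by finiteness) key
  simp only [ENNReal.toReal_mul, ENNReal.toReal_pow] at k2
  simp only [← Real.sqrt_eq_rpow]
  refine (Real.sqrt_le_sqrt k2).trans ?_
  have nS : 0 ≤ S.toReal := ENNReal.toReal_nonneg
  have nx : 0 ≤ x.toReal := ENNReal.toReal_nonneg
  have ny : 0 ≤ y.toReal := ENNReal.toReal_nonneg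
  rw [Real.sqrt_mul (by positivity), Real.sqrt_mul (by positivity), Real.sqrt_mul nx,
    Real.sqrt_sq nS, ← mul_assoc, ← mul_assoc]
  gcongr
  linarith

/-- **Trilinear estimate:** `‖Λᵢ(u,v,w)‖_{X^{−7/16,0}} ≤ C ‖u‖_{X^{1/2,0}} ‖v‖_{X^{1/2,0}}
‖w‖_{X^{1/2,0}}` for `i = 1, 2` and all trigonometric polynomials `u, v, w` on `𝕋²`. -/
theorem trilinear_X_estimate :
    ∃ C > (0:ℝ), ∀ a b c : ℤ × ℤ → ℂ,
      (Function.support a).Finite → (Function.support b).Finite →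
      (Function.support c).Finite →
      Xnorm (-(7/16)) 0 (Lam1coef a b c)
          ≤ C * Xnorm (1/2) 0 a * Xnorm (1/2) 0 b * Xnorm (1/2) 0 c ∧
      Xnorm (-(7/16)) 0 (Lam2coef a b c)
          ≤ C * Xnorm (1/2) 0 a * Xnorm (1/2) 0 b * Xnorm (1/2) 0 c := by
  obtain ⟨S, hS_top, hS⟩ := exists_kernel_bound
  refine ⟨S.toReal + 1, by positivity, fun a b c ha hb hc => ⟨?_, ?_⟩⟩
  · exact Xnorm_le_of_enorm_le hS_top hS a b c ha hb hc _ (enorm_Lam1coef_le a b c)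
  · exact Xnorm_le_of_enorm_le hS_top hS a b c ha hb hc _ (enorm_Lam2coef_le a b c)
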